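/- arXiv:1009.1042 — 3 statements merged into one kernel-verified Lean document; each statement's English description precedes it below -/
import Mathlib

section
/- Let E^* be a sublinear expectation on H, and set E_*[X] := -E^*[-X]. Then there exists a nonempty family {E_P : P ∈ 𝒫} of linear expectations on H (i.e., linear functionals that are monotone and constant preserving), each dominated by E^* (E_P[X] ≤ E^*[X] for all X ∈ H), such that for every X ∈ H one has E^*[X] = sup_{P ∈ 𝒫} E_P[X] and E_*[X] = inf_{P ∈ 𝒫} E_P[X]. -/
/-!
Take for `Ps` the set of all linear expectations on `H` dominated by `E`. By Hahn-Banach, applied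
to the linear form `c • X ↦ c * E X` on the line through `X`, each `X ∈ H` admits a linear form
`g ≤ E` with `g X = E X`. Domination alone makes `g` an expectation: it is monotone because
`X ≤ Y` gives `g (X - Y) ≤ E (X - Y) ≤ E 0 = 0`, and it preserves constants because `g c ≤ c` and
`g (-c) ≤ -c`. Hence `E X` is a maximum over `Ps`, and applying this to `-X` shows that `-E (-X)`
is a minimum.
-/

/-- Hahn-Banach: a sublinear functional has a linear minorant that touches it at a given point. -/
theorem exists_linear_le_sublinear_eq {V : Type*} [AddCommGroup V] [Module ℝ V] (N : V → ℝ)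
    (N_hom : ∀ c : ℝ, 0 ≤ c → ∀ x, N (c • x) = c * N x)
    (N_add : ∀ x y, N (x + y) ≤ N x + N y) (x₀ : V) :
    ∃ g : V →ₗ[ℝ] ℝ, g x₀ = N x₀ ∧ ∀ x, g x ≤ N x := by
  have N_0 : N 0 = 0 := by simpa using N_hom 0 le_rfl 0
  have hwd : ∀ c : ℝ, c • x₀ = 0 → (RingHom.id ℝ) c • N x₀ = 0 := by
    intro c hc
    rcases eq_or_ne c 0 with rfl | h
    · simp
    · have hx : x₀ = 0 := (smul_eq_zero.mp hc).resolve_left h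
      simp [hx, N_0]
  obtain ⟨g, hg, hgN⟩ := exists_extension_of_le_sublinear
    (LinearPMap.mkSpanSingleton' x₀ (N x₀) hwd) N (fun c hc => N_hom c hc.le) N_add (by
      rintro ⟨x, hx⟩
      obtain ⟨c, rfl⟩ := Submodule.mem_span_singleton.mp hx
      rw [LinearPMap.mkSpanSingleton'_apply]
      simp only [RingHom.id_apply, smul_eq_mul]
      rcases le_total 0 c with h | h
      · rw [N_hom c h]
      · -- For `c ≤ 0`, subadditivity gives `0 = N 0 ≤ N (c • x₀) + N (-c • x₀)`.
        have h1 := N_add (c • x₀) ((-c) • x₀)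
        rw [← add_smul, add_neg_cancel, zero_smul, N_0, N_hom (-c) (by linarith)] at h1
        linarith)
  refine ⟨g, ?_, hgN⟩
  have hx : x₀ ∈ Submodule.span ℝ {x₀} := Submodule.mem_span_singleton_self x₀
  exact (hg ⟨x₀, hx⟩).trans (LinearPMap.mkSpanSingleton'_apply_self x₀ (N x₀) hwd hx)


/-- Representation of a sublinear expectation `E` on `H` as a supremum of dominated linear
expectations, and of `E_*[X] = -E[-X]` as the corresponding infimum. -/
theorem stmt_1 {Ω : Type*} [Nonempty Ω] (H : Submodule ℝ (Ω → ℝ))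
    (hconst : ∀ c : ℝ, (fun _ : Ω => c) ∈ H)
    (E : (Ω → ℝ) → ℝ)
    (hmono : ∀ X ∈ H, ∀ Y ∈ H, (∀ ω, X ω ≤ Y ω) → E X ≤ E Y)
    (hconstE : ∀ c : ℝ, E (fun _ : Ω => c) = c)
    (hhom : ∀ l : ℝ, 0 ≤ l → ∀ X ∈ H, E (l • X) = l * E X)
    (hsub : ∀ X ∈ H, ∀ Y ∈ H, E (X + Y) ≤ E X + E Y) :
    ∃ Ps : Set ((Ω → ℝ) → ℝ), Ps.Nonempty ∧
      (∀ L ∈ Ps,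
        (∀ X ∈ H, ∀ Y ∈ H, L (X + Y) = L X + L Y) ∧
        (∀ c : ℝ, ∀ X ∈ H, L (c • X) = c * L X) ∧
        (∀ X ∈ H, ∀ Y ∈ H, (∀ ω, X ω ≤ Y ω) → L X ≤ L Y) ∧
        (∀ c : ℝ, L (fun _ : Ω => c) = c) ∧
        (∀ X ∈ H, L X ≤ E X)) ∧
      (∀ X ∈ H, E X = sSup ((fun L => L X) '' Ps) ∧
        -E (-X) = sInf ((fun L => L X) '' Ps)) := by
  classical
  set Ps : Set ((Ω → ℝ) → ℝ) := {L |
    (∀ X ∈ H, ∀ Y ∈ H, L (X + Y) = L X + L Y) ∧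
    (∀ c : ℝ, ∀ X ∈ H, L (c • X) = c * L X) ∧
    (∀ X ∈ H, ∀ Y ∈ H, (∀ ω, X ω ≤ Y ω) → L X ≤ L Y) ∧
    (∀ c : ℝ, L (fun _ : Ω => c) = c) ∧
    (∀ X ∈ H, L X ≤ E X)}
  have key : ∀ X ∈ H, ∃ L ∈ Ps, L X = E X := by
    intro X₀ hX₀
    obtain ⟨g, hg₀, hg⟩ := exists_linear_le_sublinear_eq (fun X : H => E X)
      (fun c hc X => hhom c hc X X.2) (fun X Y => hsub X X.2 Y Y.2) ⟨X₀, hX₀⟩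
    -- Outside `H` the value of `L` is irrelevant.
    let L : (Ω → ℝ) → ℝ := fun X => if h : X ∈ H then g ⟨X, h⟩ else 0
    have hL : ∀ X (h : X ∈ H), L X = g ⟨X, h⟩ := fun X h => dif_pos h
    refine ⟨L, ⟨?_, ?_, ?_, ?_, ?_⟩, by rw [hL _ hX₀, hg₀]⟩
    · intro X hX Y hY
      rw [hL _ hX, hL _ hY, hL _ (H.add_mem hX hY), ← map_add]
      rfl
    · intro c X hX
      rw [hL _ hX, hL _ (H.smul_mem c hX), ← smul_eq_mul, ← map_smul]
      rfl
    · intro X hX Y hY hXY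
      have h1 : g (⟨X, hX⟩ - ⟨Y, hY⟩) ≤ E (X - Y) := hg _
      have h2 : E (X - Y) ≤ E (fun _ => 0) :=
        hmono _ (H.sub_mem hX hY) _ (hconst 0) fun ω => sub_nonpos.mpr (hXY ω)
      rw [hconstE] at h2
      rw [map_sub] at h1
      rw [hL _ hX, hL _ hY]
      linarith
    · intro c
      have h1 : g ⟨fun _ => c, hconst c⟩ ≤ E (fun _ => c) := hg _
      have h2 : g (-⟨fun _ => c, hconst c⟩) ≤ E (fun _ => -c) := hg _
      rw [hconstE] at h1 h2
      rw [map_neg] at h2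
      rw [hL _ (hconst c)]
      linarith
    · intro X hX
      rw [hL _ hX]
      exact hg _
  refine ⟨Ps, ?_, fun L hL => hL, fun X hX => ⟨?_, ?_⟩⟩
  · obtain ⟨L, hL, -⟩ := key 0 H.zero_mem
    exact ⟨L, hL⟩
  · obtain ⟨L, hL, hLX⟩ := key X hX
    have hmax : IsGreatest ((fun L : (Ω → ℝ) → ℝ => L X) '' Ps) (E X) := by
      refine ⟨⟨L, hL, hLX⟩, ?_⟩
      rintro _ ⟨M, hM, rfl⟩
      exact hM.2.2.2.2 X hX
    exact hmax.csSup_eq.symm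
  · have hneg : ∀ M ∈ Ps, M (-X) = -M X := fun M hM => by
      simpa using hM.2.1 (-1) X hX
    obtain ⟨L, hL, hLX⟩ := key (-X) (H.neg_mem hX)
    have hmin : IsLeast ((fun L : (Ω → ℝ) → ℝ => L X) '' Ps) (-E (-X)) := by
      refine ⟨⟨L, hL, ?_⟩, ?_⟩
      · have := hneg L hL
        simp only
        linarith
      · rintro _ ⟨M, hM, rfl⟩
        have h1 := hM.2.2.2.2 (-X) (H.neg_mem hX)
        have h2 := hneg M hM
        simp only
        linarith
    exact hmin.csInf_eq.symm
end

section
/- Let d ≥ 1 and let G : S(d) → ℝ be a functional on the real symmetric d×d matrices which is positively homogeneous (G(λA) = λG(A) for all λ ≥ 0), super-additive (G(A+B) ≥ G(A) + G(B)), and monotone with respect to the Loewner order (A ≤ B implies G(A) ≤ G(B)). Then there exists a nonempty, bounded and closed subset Γ ⊆ ℝ^{d×d} such that G(A) = (1/2) inf_{γ ∈ Γ} tr(γγᵀA) for every symmetric matrix A. -/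
/-!
Hahn–Banach supplies, for each symmetric `A`, a linear functional that dominates `G` on symmetric
matrices and agrees with `G` at `A` (`exists_linear_support`). A linear functional dominating `G`
is given on them by `X ↦ tr (B X)` for a symmetric `B`, and monotonicity makes it nonnegative on
the rank-one matrices `x xᵀ`, so `2 B = γ γᵀ` for some `γ` (`exists_factor`). Hence one may take for
`Γ` the set of all `γ` with `2 G A ≤ tr (γ γᵀ A)` for every symmetric `A`, and the infimum is even
attained. This set is an intersection of closed sets, and it is bounded because `A = -1` gives
`∑ i j, γ i j ^ 2 ≤ -2 G (-1)`.
-/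

open Matrix

/-- A supporting functional of `G` at `A`, defined on all square matrices so that no space of
symmetric matrices is needed: it dominates `G` at the symmetric part `(X + Xᵀ)/2` of `X`.
It extends `t • A ↦ t * G A` below the sublinear functional `X ↦ -G (-(X + Xᵀ)/2)`. -/
lemma exists_linear_support {d : ℕ} (G : Matrix (Fin d) (Fin d) ℝ → ℝ)
    (hhom : ∀ l : ℝ, 0 ≤ l → ∀ A : Matrix (Fin d) (Fin d) ℝ, A.IsSymm → G (l • A) = l * G A)
    (hsuper : ∀ A B : Matrix (Fin d) (Fin d) ℝ, A.IsSymm → B.IsSymm → G A + G B ≤ G (A + B))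
    (A : Matrix (Fin d) (Fin d) ℝ) (hA : A.IsSymm) :
    ∃ g : Matrix (Fin d) (Fin d) ℝ →ₗ[ℝ] ℝ, g A = G A ∧
      ∀ X, G ((1 / 2 : ℝ) • (X + Xᵀ)) ≤ g X := by
  have hsym : ∀ X : Matrix (Fin d) (Fin d) ℝ, ((1 / 2 : ℝ) • (X + Xᵀ)).IsSymm := fun X => by
    simp [Matrix.IsSymm, add_comm]
  have h0 : G 0 = 0 := by
    simpa using hhom 0 le_rfl 0 (by simp [Matrix.IsSymm])
  have hker : ∀ c : ℝ, c • A = 0 → (RingHom.id ℝ) c • G A = 0 := fun c hc => by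
    rcases smul_eq_zero.1 hc with h | h
    · simp [h]
    · simp [h, h0]
  obtain ⟨g, hg, hgN⟩ := exists_extension_of_le_sublinear
    (LinearPMap.mkSpanSingleton' (R := ℝ) A (G A) hker)
    (fun X => -G ((1 / 2 : ℝ) • (-X + (-X)ᵀ)))
    (fun c hc X => by
      rw [mul_neg, ← hhom c hc.le _ (hsym _)]
      congr 2
      simp only [transpose_neg, transpose_smul, smul_add, smul_neg, smul_smul, mul_comm])
    (fun X Y => by
      have h := hsuper _ _ (hsym (-X)) (hsym (-Y))
      have e : (1 / 2 : ℝ) • (-X + (-X)ᵀ) + (1 / 2 : ℝ) • (-Y + (-Y)ᵀ)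
          = (1 / 2 : ℝ) • (-(X + Y) + (-(X + Y))ᵀ) := by
        simp only [transpose_neg, transpose_add]
        module
      rw [e] at h
      linarith)
    (by
      rintro ⟨x, hx⟩
      obtain ⟨t, rfl⟩ := Submodule.mem_span_singleton.1 hx
      rw [LinearPMap.mkSpanSingleton'_apply]
      have e : (1 / 2 : ℝ) • (-(t • A) + (-(t • A))ᵀ) = (-t) • A := by
        simp only [transpose_neg, transpose_smul, hA.eq]
        module
      simp only [e, smul_eq_mul, RingHom.id_apply]
      rcases le_total 0 t with ht | ht
      · have h := hsuper (t • A) ((-t) • A) (hA.smul _) (hA.smul _)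
        rw [hhom t ht A hA, ← add_smul, add_neg_cancel, zero_smul, h0] at h
        linarith
      · rw [hhom (-t) (by linarith) A hA]
        linarith)
  refine ⟨g, ?_, fun X => ?_⟩
  · have hm : A ∈ (LinearPMap.mkSpanSingleton' (R := ℝ) A (G A) hker).domain := Submodule.mem_span_singleton_self A
    rw [hg ⟨A, hm⟩]
    exact LinearPMap.mkSpanSingleton'_apply_self A (G A) _ _
  · have h := hgN (-X)
    simp only [neg_neg, map_neg] at h
    linarith

open scoped MatrixOrder Matrix.Norms.L2Operator in
/-- A linear functional invariant under transposition and nonnegative on the matrices `x xᵀ` is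
`X ↦ tr (γ γᵀ X)` for some `γ`. -/
lemma exists_factor {d : ℕ} (g : Matrix (Fin d) (Fin d) ℝ →ₗ[ℝ] ℝ)
    (hT : ∀ X, g Xᵀ = g X) (hpos : ∀ x : Fin d → ℝ, 0 ≤ g (vecMulVec x x)) :
    ∃ γ : Matrix (Fin d) (Fin d) ℝ, ∀ X, (γ * γᵀ * X).trace = g X := by
  let B : Matrix (Fin d) (Fin d) ℝ := Matrix.of fun i j => g (Matrix.single j i 1)
  have hB : ∀ X, (B * X).trace = g X := fun X => by
    conv_rhs => rw [Matrix.matrix_eq_sum_single X]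
    simp only [map_sum, Matrix.trace, Matrix.diag, Matrix.mul_apply]
    rw [Finset.sum_comm]
    refine Finset.sum_congr rfl fun i _ => Finset.sum_congr rfl fun j _ => ?_
    have : Matrix.single i j (X i j) = X i j • Matrix.single i j (1 : ℝ) := by simp
    rw [this, map_smul, smul_eq_mul, mul_comm]
    rfl
  have hPSD : B.PosSemidef := by
    refine Matrix.PosSemidef.of_dotProduct_mulVec_nonneg ?_ fun x => ?_
    · ext i j
      simp only [conjTranspose_apply, star_trivial, B, Matrix.of_apply]
      rw [← hT, Matrix.transpose_single]
    · have h := hpos x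
      rw [← hB, Matrix.mul_vecMulVec, Matrix.trace_vecMulVec, dotProduct_comm] at h
      simpa using h
  obtain ⟨C, hC⟩ := CStarAlgebra.nonneg_iff_eq_star_mul_self.1 hPSD.nonneg
  refine ⟨Cᵀ, fun X => ?_⟩
  rw [← hB, hC]
  simp [Matrix.star_eq_conjTranspose]

/-- A positively homogeneous, super-additive functional on symmetric `d × d` matrices which is
monotone for the Loewner order is of the form `G(A) = (1/2) inf_{γ ∈ Γ} tr(γ γᵀ A)` for some
nonempty, bounded and closed set `Γ` of `d × d` matrices. -/
theorem stmt_2 (d : ℕ) (hd : 1 ≤ d) (G : Matrix (Fin d) (Fin d) ℝ → ℝ)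
    (hhom : ∀ l : ℝ, 0 ≤ l → ∀ A : Matrix (Fin d) (Fin d) ℝ, A.IsSymm → G (l • A) = l * G A)
    (hsuper : ∀ A B : Matrix (Fin d) (Fin d) ℝ, A.IsSymm → B.IsSymm → G A + G B ≤ G (A + B))
    (hmono : ∀ A B : Matrix (Fin d) (Fin d) ℝ, A.IsSymm → B.IsSymm →
      (B - A).PosSemidef → G A ≤ G B) :
    ∃ Γ : Set (Matrix (Fin d) (Fin d) ℝ), Γ.Nonempty ∧ IsClosed Γ ∧
      (∃ M : ℝ, ∀ γ ∈ Γ, ∀ i j, |γ i j| ≤ M) ∧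
      ∀ A : Matrix (Fin d) (Fin d) ℝ, A.IsSymm →
        G A = (1 / 2) *
          sInf ((fun γ : Matrix (Fin d) (Fin d) ℝ => (γ * γ.transpose * A).trace) '' Γ) := by
  have h0 : G 0 = 0 := by
    simpa using hhom 0 le_rfl 0 (by simp [Matrix.IsSymm])
  have key : ∀ A : Matrix (Fin d) (Fin d) ℝ, A.IsSymm →
      ∃ γ : Matrix (Fin d) (Fin d) ℝ, (∀ X : Matrix (Fin d) (Fin d) ℝ, X.IsSymm →
        2 * G X ≤ (γ * γᵀ * X).trace) ∧ (γ * γᵀ * A).trace = 2 * G A := by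
    intro A hA
    obtain ⟨g, hgA, hg⟩ := exists_linear_support G hhom hsuper A hA
    have hgs : ∀ X : Matrix (Fin d) (Fin d) ℝ, X.IsSymm → G X ≤ g X := fun X hX => by
      have h := hg X
      rwa [hX.eq, ← two_smul ℝ X, smul_smul, one_div, inv_mul_cancel₀ two_ne_zero, one_smul] at h
    -- `g` is nonnegative at `Y` and `-Y` for antisymmetric `Y`, so it vanishes there.
    have hT : ∀ X, g Xᵀ = g X := fun X => by
      have h1 := hg (X - Xᵀ)
      have h2 := hg (Xᵀ - X)
      simp only [transpose_sub, transpose_transpose, sub_add_sub_cancel, sub_self, smul_zero, h0,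
        map_sub] at h1 h2
      linarith
    have hpos : ∀ x : Fin d → ℝ, 0 ≤ g (vecMulVec x x) := fun x => by
      have hs : (vecMulVec x x).IsSymm := Matrix.transpose_vecMulVec x x
      have hp := hmono 0 (vecMulVec x x) (by simp [Matrix.IsSymm]) hs
        (by simpa using Matrix.posSemidef_vecMulVec_self_star x)
      linarith [hgs _ hs]
    obtain ⟨γ, hγ⟩ := exists_factor ((2 : ℝ) • g) (fun X => by simp [hT X])
      (fun x => by simpa using hpos x)
    refine ⟨γ, fun X hX => ?_, ?_⟩
    · rw [hγ]
      simpa using hgs X hX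
    · rw [hγ]
      simp [hgA]
  refine ⟨{γ | ∀ X : Matrix (Fin d) (Fin d) ℝ, X.IsSymm → 2 * G X ≤ (γ * γᵀ * X).trace},
    ?_, ?_, ?_, fun A hA => ?_⟩
  · obtain ⟨γ, hγ, -⟩ := key 0 (by simp [Matrix.IsSymm])
    exact ⟨γ, hγ⟩
  · simp only [Set.ofPred_forall]
    refine isClosed_iInter fun X => isClosed_iInter fun _ => isClosed_le continuous_const ?_
    fun_prop
  · refine ⟨Real.sqrt (-(2 * G (-1))), fun γ hγ i j => Real.abs_le_sqrt ?_⟩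
    have h := hγ (-1) (by simp [Matrix.IsSymm])
    have e : (γ * γᵀ).trace = ∑ i, ∑ j, γ i j ^ 2 := by
      simp [Matrix.trace, Matrix.mul_apply, sq]
    rw [mul_neg, mul_one, trace_neg, e] at h
    have h1 : γ i j ^ 2 ≤ ∑ j, γ i j ^ 2 :=
      Finset.single_le_sum (f := fun j => γ i j ^ 2) (fun _ _ => sq_nonneg _) (Finset.mem_univ j)
    have h2 : ∑ j, γ i j ^ 2 ≤ ∑ i, ∑ j, γ i j ^ 2 :=
      Finset.single_le_sum (f := fun i => ∑ j, γ i j ^ 2)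
        (fun _ _ => Finset.sum_nonneg fun _ _ => sq_nonneg _) (Finset.mem_univ i)
    linarith
  · obtain ⟨γ, hγ, hγA⟩ := key A hA
    have hl : IsLeast ((fun γ : Matrix (Fin d) (Fin d) ℝ => (γ * γ.transpose * A).trace) ''
        {γ | ∀ X : Matrix (Fin d) (Fin d) ℝ, X.IsSymm → 2 * G X ≤ (γ * γᵀ * X).trace})
        (2 * G A) := by
      refine ⟨⟨γ, hγ, hγA⟩, ?_⟩
      rintro _ ⟨δ, hδ, rfl⟩
      exact hδ A hA
    rw [hl.csInf_eq]
    ring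
end

section
/- Let (Ω, ℱ) be a measurable space, 𝒫 a nonempty set of probability measures on (Ω, ℱ), and C*(A) := sup_{P ∈ 𝒫} P(A). Let X_n, X, Y : Ω → ℝ be measurable functions with Y ≥ 0, Y integrable with respect to every P ∈ 𝒫 and sup_{P ∈ 𝒫} ∫ Y dP < ∞. Assume: (a) for each n, |X_n| ≤ Y quasi-surely (outside a set of C*-capacity zero); (b) (uniform integrability of Y) for every ε > 0 there exists δ > 0 such that every A ∈ ℱ with C*(A) < δ satisfies sup_{P ∈ 𝒫} ∫_A Y dP < ε; (c) X_n converges to X in capacity, i.e., for every ε > 0, C*({|X_n − X| > ε}) → 0. Then each X_n and X are integrable with respect to every P ∈ 𝒫, and lim_{n → ∞} sup_{P ∈ 𝒫} ∫ X_n dP = sup_{P ∈ 𝒫} ∫ X dP. -/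
/-! The classical argument works because every estimate is uniform over the set `Ps` of measures.
Convergence in capacity implies convergence in `P`-measure for each `P ∈ Ps`, so the limit
inherits the bound `|Xlim| ≤ Y` almost surely (`abs_limit_le`). Splitting the domain along
`{ε < |X n - Xlim|}` gives `∫ |X n - Xlim| ∂P ≤ ε + 2 ∫_{ε < |X n - Xlim|} Y ∂P`
(`integral_abs_sub_le`), and uniform integrability bounds the last term for all `P ∈ Ps`
simultaneously once the capacity of the event is small. Finally, two families of reals that are
uniformly close have close suprema (`abs_ciSup_sub_ciSup_le`). -/

open MeasureTheory Filter

/-- A bound holding almost surely along a sequence passes to its limit in measure, by extracting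
an almost surely convergent subsequence. -/
lemma abs_limit_le {Ω : Type*} [MeasurableSpace Ω] {P : Measure Ω}
    {X : ℕ → Ω → ℝ} {Xlim Y : Ω → ℝ} (hdom : ∀ n, ∀ᵐ ω ∂P, |X n ω| ≤ Y ω)
    (hconv : ∀ ε : ℝ, 0 < ε →
      Tendsto (fun n => P {ω | ε < |X n ω - Xlim ω|}) atTop (nhds 0)) :
    ∀ᵐ ω ∂P, |Xlim ω| ≤ Y ω := by
  have hm : TendstoInMeasure P X atTop Xlim := by
    rw [tendstoInMeasure_iff_norm]
    intro ε hε
    -- `TendstoInMeasure` uses a non-strict inequality, hence the passage to `ε / 2`.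
    refine tendsto_of_tendsto_of_tendsto_of_le_of_le tendsto_const_nhds
      (hconv (ε / 2) (by positivity)) (fun n => zero_le) (fun n => measure_mono ?_)
    intro ω hω
    simp only [Set.mem_ofPred_eq, Real.norm_eq_abs] at hω ⊢
    linarith
  obtain ⟨ns, -, hns⟩ := hm.exists_seq_tendsto_ae
  filter_upwards [hns, ae_all_iff.2 hdom] with ω h1 h2
  exact le_of_tendsto h1.abs (Eventually.of_forall fun i => h2 (ns i))

lemma integral_abs_sub_le {Ω : Type*} [MeasurableSpace Ω] {P : Measure Ω}
    [IsProbabilityMeasure P] {U V Y : Ω → ℝ} (hU : Measurable U) (hV : Measurable V)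
    (hY : Integrable Y P) (hUY : ∀ᵐ ω ∂P, |U ω| ≤ Y ω) (hVY : ∀ᵐ ω ∂P, |V ω| ≤ Y ω)
    {ε : ℝ} (hε : 0 < ε) :
    ∫ ω, |U ω - V ω| ∂P ≤ ε + 2 * ∫ ω in {ω | ε < |U ω - V ω|}, Y ω ∂P := by
  have hA : MeasurableSet {ω | ε < |U ω - V ω|} :=
    measurableSet_lt measurable_const (by fun_prop)
  have hUi : Integrable U P := hY.mono' hU.aestronglyMeasurable hUY
  have hVi : Integrable V P := hY.mono' hV.aestronglyMeasurable hVY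
  have hYA := (hY.indicator hA).const_mul 2
  calc ∫ ω, |U ω - V ω| ∂P
      ≤ ∫ ω, (ε + 2 * Set.indicator {ω | ε < |U ω - V ω|} Y ω) ∂P := by
        refine integral_mono_ae (hUi.sub hVi).abs ((integrable_const ε).add hYA) ?_
        filter_upwards [hUY, hVY] with ω h1 h2
        by_cases h : ε < |U ω - V ω|
        · rw [Set.indicator_of_mem (by exact h)]
          have := abs_sub (U ω) (V ω)
          linarith
        · rw [Set.indicator_of_notMem (by exact h)]
          linarith
    _ = ε + 2 * ∫ ω in {ω | ε < |U ω - V ω|}, Y ω ∂P := by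
        rw [integral_add (integrable_const ε) hYA, integral_const_mul, integral_indicator hA]
        simp

lemma abs_ciSup_sub_ciSup_le {ι : Type*} [Nonempty ι] {f g : ι → ℝ} {c : ℝ}
    (hf : BddAbove (Set.range f)) (hg : BddAbove (Set.range g))
    (h : ∀ i, |f i - g i| ≤ c) : |(⨆ i, f i) - ⨆ i, g i| ≤ c := by
  have h1 : (⨆ i, f i) ≤ (⨆ i, g i) + c := ciSup_le fun i => by
    linarith [(abs_le.1 (h i)).2, le_ciSup hg i]
  have h2 : (⨆ i, g i) ≤ (⨆ i, f i) + c := ciSup_le fun i => by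
    linarith [(abs_le.1 (h i)).1, le_ciSup hf i]
  exact abs_le.2 ⟨by linarith, by linarith⟩

/-- Dominated convergence theorem for the upper expectation `sup_{P ∈ Ps} ∫ · dP` under
convergence in capacity, domination quasi-surely, and uniform integrability of the
dominating function. -/
theorem stmt_10 {Ω : Type*} [MeasurableSpace Ω]
    (Ps : Set (Measure Ω)) (hPs : Ps.Nonempty)
    (hprob : ∀ P ∈ Ps, IsProbabilityMeasure P)
    (X : ℕ → Ω → ℝ) (Xlim Y : Ω → ℝ)
    (hX : ∀ n, Measurable (X n)) (hXlim : Measurable Xlim) (hY : Measurable Y)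
    (hYpos : ∀ ω, 0 ≤ Y ω)
    (hYint : ∀ P ∈ Ps, Integrable Y P)
    (hYbdd : ∃ M : ℝ, ∀ P ∈ Ps, ∫ ω, Y ω ∂P ≤ M)
    (hdom : ∀ n, ∃ N : Set Ω, MeasurableSet N ∧ (⨆ P ∈ Ps, P N) = 0 ∧
      ∀ ω ∉ N, |X n ω| ≤ Y ω)
    (hui : ∀ ε : ℝ, 0 < ε → ∃ δ : ℝ, 0 < δ ∧ ∀ A : Set Ω, MeasurableSet A →
      (⨆ P ∈ Ps, P A) < ENNReal.ofReal δ → ∀ P ∈ Ps, ∫ ω in A, Y ω ∂P < ε)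
    (hconv : ∀ ε : ℝ, 0 < ε →
      Tendsto (fun n => ⨆ P ∈ Ps, P {ω | ε < |X n ω - Xlim ω|}) atTop (nhds 0)) :
    (∀ P ∈ Ps, Integrable Xlim P ∧ ∀ n, Integrable (X n) P) ∧
    Tendsto (fun n => ⨆ P : Ps, ∫ ω, X n ω ∂(P : Measure Ω)) atTop
      (nhds (⨆ P : Ps, ∫ ω, Xlim ω ∂(P : Measure Ω))) := by
  have hle : ∀ P ∈ Ps, ∀ A, P A ≤ ⨆ Q ∈ Ps, Q A := fun P hP A =>
    le_iSup₂ (f := fun (Q : Measure Ω) (_ : Q ∈ Ps) => Q A) P hP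
  have hXY : ∀ P ∈ Ps, ∀ n, ∀ᵐ ω ∂P, |X n ω| ≤ Y ω := by
    intro P hP n
    obtain ⟨N, -, hN0, hN⟩ := hdom n
    have : P N = 0 := le_antisymm ((hle P hP N).trans hN0.le) zero_le
    filter_upwards [measure_eq_zero_iff_ae_notMem.1 this] with ω hω using hN ω hω
  have hLY : ∀ P ∈ Ps, ∀ᵐ ω ∂P, |Xlim ω| ≤ Y ω := fun P hP =>
    abs_limit_le (hXY P hP) fun ε hε =>
      tendsto_of_tendsto_of_tendsto_of_le_of_le tendsto_const_nhds (hconv ε hε)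
        (fun n => zero_le) (fun n => hle P hP _)
  have hXi : ∀ P ∈ Ps, ∀ n, Integrable (X n) P := fun P hP n =>
    (hYint P hP).mono' (hX n).aestronglyMeasurable (hXY P hP n)
  have hLi : ∀ P ∈ Ps, Integrable Xlim P := fun P hP =>
    (hYint P hP).mono' hXlim.aestronglyMeasurable (hLY P hP)
  refine ⟨fun P hP => ⟨hLi P hP, hXi P hP⟩, ?_⟩
  obtain ⟨M, hM⟩ := hYbdd
  have : Nonempty Ps := hPs.to_subtype
  -- The real-valued suprema are genuine because the families are bounded above by `M`.
  have hbdd : ∀ Z : Ω → ℝ, (∀ P ∈ Ps, Integrable Z P) → (∀ P ∈ Ps, ∀ᵐ ω ∂P, |Z ω| ≤ Y ω) →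
      BddAbove (Set.range fun P : Ps => ∫ ω, Z ω ∂(P : Measure Ω)) := by
    rintro Z hZ hZY
    refine ⟨M, ?_⟩
    rintro _ ⟨⟨P, hP⟩, rfl⟩
    refine le_trans (integral_mono_ae (hZ P hP) (hYint P hP) ?_) (hM P hP)
    filter_upwards [hZY P hP] with ω hω using (le_abs_self _).trans hω
  rw [Metric.tendsto_atTop']
  intro ε hε
  obtain ⟨δ, hδ, hδA⟩ := hui (ε / 8) (by positivity)
  have hev := (hconv (ε / 4) (by positivity)).eventually_lt_const (ENNReal.ofReal_pos.2 hδ)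
  obtain ⟨n₀, hn₀⟩ := eventually_atTop.1 hev
  refine ⟨n₀, fun n hn => ?_⟩
  rw [Real.dist_eq]
  refine lt_of_le_of_lt (b := ε / 2) (abs_ciSup_sub_ciSup_le
    (hbdd (X n) (fun P hP => hXi P hP n) fun P hP => hXY P hP n) (hbdd Xlim hLi hLY) ?_)
    (by linarith)
  rintro ⟨P, hP⟩
  have := hprob P hP
  have h1 := integral_abs_sub_le (hX n) hXlim (hYint P hP) (hXY P hP n) (hLY P hP)
    (show 0 < ε / 4 by positivity)
  have h2 := hδA {ω | ε / 4 < |X n ω - Xlim ω|}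
    (measurableSet_lt measurable_const (((hX n).sub hXlim).abs)) (hn₀ n hn.le) P hP
  have h3 : |∫ ω, (X n ω - Xlim ω) ∂P| ≤ ∫ ω, |X n ω - Xlim ω| ∂P :=
    abs_integral_le_integral_abs
  rw [integral_sub (hXi P hP n) (hLi P hP)] at h3
  change |∫ ω, X n ω ∂P - ∫ ω, Xlim ω ∂P| ≤ ε / 2
  linarith
end
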